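/- arXiv:2404.01333 — 5 statements merged into one kernel-verified Lean document; each statement's English description precedes it below -/
import Mathlib

section
/- Let (U_t)_{t∈ℝ} be a strongly continuous one-parameter unitary group on a complex Hilbert space H (U_{s+t} = U_s U_t, U_0 = 1, and t ↦ U_t x is continuous for every x ∈ H). Define D_A = {φ ∈ H : the limit lim_{ε→0} (U_ε φ − φ)/(iε) exists} and A φ = −i lim_{ε→0} (U_ε φ − φ)/ε for φ ∈ D_A. Then D_A is a dense subspace of H, the unbounded operator A with domain D_A is self-adjoint, each U_t maps D_A into D_A, and for φ ∈ D_A the map t ↦ U_t φ is differentiable with derivative (d/dt) U_t φ = i A U_t φ. -/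
open scoped InnerProductSpace

section StoneAux

variable {H : Type} [NormedAddCommGroup H] [InnerProductSpace ℂ H]

theorem stone_tendsto_iff (U : ℝ → H →L[ℂ] H) (hzero : U 0 = 1) (φ ψ : H) :
    Filter.Tendsto (fun ε : ℝ => (ε : ℂ)⁻¹ • (U ε φ - φ))
      (nhdsWithin (0 : ℝ) {0}ᶜ) (nhds ψ) ↔ HasDerivAt (fun t : ℝ => U t φ) ψ 0 := by
  rw [hasDerivAt_iff_tendsto_slope]
  have h : (fun ε : ℝ => (ε : ℂ)⁻¹ • (U ε φ - φ)) = slope (fun t : ℝ => U t φ) 0 := by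
    funext ε
    rw [slope_def_module, hzero, sub_zero, ← Complex.ofReal_inv, Complex.coe_smul]
    rfl
  rw [h]

theorem stone_deriv_shift (U : ℝ → H →L[ℂ] H) (hgrp : ∀ s t : ℝ, U (s + t) = U s * U t)
    (φ ψ : H) (h : HasDerivAt (fun t : ℝ => U t φ) ψ 0) (t : ℝ) :
    HasDerivAt (fun s : ℝ => U s φ) (U t ψ) t := by
  have h0 : HasDerivAt (fun s : ℝ => U s φ) ψ (t + -t) := by simpa using h
  have h1 : HasDerivAt (fun s : ℝ => U (s + -t) φ) ψ t := h0.comp_add_const t (-t)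
  have h2 := ((U t).restrictScalars ℝ).hasFDerivAt.comp_hasDerivAt t h1
  convert h2 using 1
  · funext s
    have : U s = U t * U (s + -t) := by rw [← hgrp]; congr 1; ring
    rw [this]; rfl
  · rfl

theorem stone_deriv_apply (U : ℝ → H →L[ℂ] H) (hgrp : ∀ s t : ℝ, U (s + t) = U s * U t)
    (φ ψ : H) (h : HasDerivAt (fun t : ℝ => U t φ) ψ 0) (t : ℝ) :
    HasDerivAt (fun s : ℝ => U s (U t φ)) (U t ψ) 0 := by
  have h2 := ((U t).restrictScalars ℝ).hasFDerivAt.comp_hasDerivAt 0 h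
  convert h2 using 1
  · funext s
    have : U s * U t = U t * U s := by rw [← hgrp, ← hgrp, add_comm]
    exact congrArg (fun L : H →L[ℂ] H => L φ) this
  · rfl

/-- The generator. -/
noncomputable def stoneGen (U : ℝ → H →L[ℂ] H) : H →ₗ.[ℂ] H where
  domain :=
    { carrier := {φ | DifferentiableAt ℝ (fun t : ℝ => U t φ) 0}
      add_mem' := by
        intro a b ha hb
        simpa using DifferentiableAt.fun_add ha hb
      zero_mem' := by simp
      smul_mem' := by
        intro c x hx
        simpa using DifferentiableAt.fun_const_smul hx c }
  toFun :=
    { toFun := fun φ => -Complex.I • deriv (fun t : ℝ => U t (φ : H)) 0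
      map_add' := by
        rintro ⟨a, ha⟩ ⟨b, hb⟩
        have := (HasDerivAt.fun_add (DifferentiableAt.hasDerivAt ha)
          (DifferentiableAt.hasDerivAt hb)).deriv
        simp only [← map_add] at this
        simp [this, ← map_add, smul_add]
        try abel
      map_smul' := by
        rintro c ⟨a, ha⟩
        have := (HasDerivAt.fun_const_smul c (DifferentiableAt.hasDerivAt ha)).deriv
        simp only [← map_smul] at this
        simp only [SetLike.mk_smul_mk, this, RingHom.id_apply]
        rw [smul_comm] }

theorem stoneGen_mem (U : ℝ → H →L[ℂ] H) (φ : H) :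
    φ ∈ (stoneGen U).domain ↔ DifferentiableAt ℝ (fun t : ℝ => U t φ) 0 := Iff.rfl

theorem stoneGen_apply (U : ℝ → H →L[ℂ] H) (φ : H) (hφ : φ ∈ (stoneGen U).domain) :
    stoneGen U ⟨φ, hφ⟩ = -Complex.I • deriv (fun t : ℝ => U t φ) 0 := rfl

theorem stoneGen_hasDerivAt (U : ℝ → H →L[ℂ] H) (φ : H) (hφ : φ ∈ (stoneGen U).domain) :
    HasDerivAt (fun t : ℝ => U t φ) (Complex.I • stoneGen U ⟨φ, hφ⟩) 0 := by
  rw [stoneGen_apply, smul_smul]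
  simpa using DifferentiableAt.hasDerivAt hφ

theorem stoneGen_eq (U : ℝ → H →L[ℂ] H) (φ ψ : H) (h : HasDerivAt (fun t : ℝ => U t φ) ψ 0)
    (hφ : φ ∈ (stoneGen U).domain) : stoneGen U ⟨φ, hφ⟩ = -Complex.I • ψ := by
  rw [stoneGen_apply, h.deriv]

theorem stoneGen_dense [CompleteSpace H] (U : ℝ → H →L[ℂ] H)
    (hgrp : ∀ s t : ℝ, U (s + t) = U s * U t) (hzero : U 0 = 1)
    (hcont : ∀ x : H, Continuous fun t : ℝ => U t x) :
    Dense ((stoneGen U).domain : Set H) := by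
  intro x
  have hd : ∀ b : ℝ, HasDerivAt (fun h : ℝ => ∫ s in (0 : ℝ)..h, U s x) (U b x) b := fun b =>
    intervalIntegral.integral_hasDerivAt_right ((hcont x).intervalIntegrable _ _)
      ((hcont x).stronglyMeasurableAtFilter _ _) (hcont x).continuousAt
  have hmem : ∀ h : ℝ, (∫ s in (0 : ℝ)..h, U s x) ∈ (stoneGen U).domain := by
    intro h
    rw [stoneGen_mem]
    have key : (fun t : ℝ => U t (∫ s in (0 : ℝ)..h, U s x)) =
        fun t : ℝ => (∫ s in (0 : ℝ)..(t + h), U s x) - ∫ s in (0 : ℝ)..t, U s x := by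
      funext t
      rw [← ContinuousLinearMap.intervalIntegral_comp_comm _
        ((hcont x).intervalIntegrable _ _)]
      have h1 : ∀ s : ℝ, U t (U s x) = U (t + s) x := fun s => by rw [hgrp]; rfl
      simp only [h1]
      rw [intervalIntegral.integral_comp_add_left (fun s => U s x) t,
        intervalIntegral.integral_interval_sub_left ((hcont x).intervalIntegrable _ _)
        ((hcont x).intervalIntegrable _ _), add_zero]
    rw [key]
    have h1 := (hd (0 + h)).comp_add_const 0 h
    exact (h1.sub (hd 0)).differentiableAt
  have hx := hasDerivAt_iff_tendsto_slope.mp (hd 0)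
  rw [hzero] at hx
  refine mem_closure_of_tendsto hx (Filter.Eventually.of_forall fun h => ?_)
  rw [slope_def_module, ← Complex.coe_smul]
  exact (stoneGen U).domain.smul_mem _ ((stoneGen U).domain.sub_mem (hmem _) (hmem _))

theorem stoneGen_symm (U : ℝ → H →L[ℂ] H) (hzero : U 0 = 1)
    (hunitary : ∀ (t : ℝ) (x y : H), ⟪U t x, U t y⟫_ℂ = ⟪x, y⟫_ℂ) :
    (stoneGen U).IsFormalAdjoint (stoneGen U) := by
  rintro ⟨φ, hφ⟩ ⟨χ, hχ⟩
  have h := (stoneGen_hasDerivAt U φ hφ).inner ℂ (stoneGen_hasDerivAt U χ hχ)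
  simp only [hunitary] at h
  have h2 := h.unique (hasDerivAt_const _ _)
  simp only [hzero, inner_smul_left, inner_smul_right, Complex.conj_I,
    one_apply_eq_self] at h2
  have h3 : Complex.I * (⟪φ, stoneGen U ⟨χ, hχ⟩⟫_ℂ - ⟪stoneGen U ⟨φ, hφ⟩, χ⟫_ℂ) = 0 := by
    rw [← h2]; ring
  have h4 := (mul_eq_zero.mp h3).resolve_left Complex.I_ne_zero
  exact (sub_eq_zero.mp h4).symm

theorem stoneGen_adjoint_hasDerivAt [CompleteSpace H] (U : ℝ → H →L[ℂ] H)
    (hgrp : ∀ s t : ℝ, U (s + t) = U s * U t) (hzero : U 0 = 1)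
    (hunitary : ∀ (t : ℝ) (x y : H), ⟪U t x, U t y⟫_ℂ = ⟪x, y⟫_ℂ)
    (hcont : ∀ x : H, Continuous fun t : ℝ => U t x) (y w : H)
    (hyw : ∀ x : (stoneGen U).domain, ⟪w, (x : H)⟫_ℂ = ⟪y, stoneGen U x⟫_ℂ) :
    HasDerivAt (fun t : ℝ => U t y) (Complex.I • w) 0 := by
  have hadj : ∀ (t : ℝ) (a b : H), ⟪U (-t) a, b⟫_ℂ = ⟪a, U t b⟫_ℂ := by
    intro t a b
    rw [← hunitary t]
    congr 1
    change (U t * U (-t)) a = a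
    rw [← hgrp, add_neg_cancel, hzero]; rfl
  have hc : Continuous fun s : ℝ => U (-s) w := (hcont w).comp continuous_neg
  have hd : ∀ b : ℝ, HasDerivAt (fun h : ℝ => y - Complex.I • ∫ s in (0 : ℝ)..h, U (-s) w)
      (-(Complex.I • U (-b) w)) b := fun b =>
    ((intervalIntegral.integral_hasDerivAt_right (hc.intervalIntegrable _ _)
      (hc.stronglyMeasurableAtFilter _ _) hc.continuousAt).fun_const_smul Complex.I).const_sub y
  have hFG : ∀ t : ℝ, U (-t) y = y - Complex.I • ∫ s in (0 : ℝ)..t, U (-s) w := by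
    intro t
    refine (stoneGen_dense U hgrp hzero hcont).eq_of_inner_left (𝕜 := ℂ) ?_
    intro φ hφ
    have hder : ∀ b : ℝ, HasDerivAt (fun t : ℝ => ⟪U (-t) y, φ⟫_ℂ -
        ⟪y - Complex.I • ∫ s in (0 : ℝ)..t, U (-s) w, φ⟫_ℂ) 0 b := by
      intro b
      simp only [hadj]
      have h1 := (hasDerivAt_const b y).inner ℂ
        (stone_deriv_shift U hgrp _ _ (stoneGen_hasDerivAt U φ hφ) b)
      have h2 := (hd b).inner ℂ (hasDerivAt_const b φ)
      have hs := stone_deriv_apply U hgrp _ _ (stoneGen_hasDerivAt U φ hφ) b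
      have hm : U b φ ∈ (stoneGen U).domain := hs.differentiableAt
      have he := stoneGen_eq U _ _ hs hm
      have hy := hyw ⟨U b φ, hm⟩
      rw [he] at hy
      refine (h1.sub h2).congr_deriv ?_
      simp only [inner_zero_left, inner_zero_right, add_zero, zero_add, inner_neg_left,
        inner_smul_left, hadj, hy, inner_smul_right, map_smul, Complex.conj_I]
      ring_nf
      simp
    have := is_const_of_deriv_eq_zero (𝕜 := ℝ) (fun b => (hder b).differentiableAt)
      (fun b => (hder b).deriv) t 0
    simp only [neg_zero, hzero, intervalIntegral.integral_same, smul_zero, sub_zero,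
      one_apply_eq_self, sub_self] at this
    exact sub_eq_zero.mp this
  have h0 := hd 0
  simp only [← hFG, neg_zero, hzero, one_apply_eq_self] at h0
  have h1 : HasDerivAt (fun t : ℝ => U (-t) y) (-(Complex.I • w)) (-0) := by simpa using h0
  have h2 := HasDerivAt.scomp (0 : ℝ) h1 (hasDerivAt_neg (0 : ℝ))
  simpa [Function.comp_def] using h2

theorem stoneGen_isSelfAdjoint [CompleteSpace H] (U : ℝ → H →L[ℂ] H)
    (hgrp : ∀ s t : ℝ, U (s + t) = U s * U t) (hzero : U 0 = 1)
    (hunitary : ∀ (t : ℝ) (x y : H), ⟪U t x, U t y⟫_ℂ = ⟪x, y⟫_ℂ)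
    (hcont : ∀ x : H, Continuous fun t : ℝ => U t x) :
    IsSelfAdjoint (stoneGen U) := by
  have hD := stoneGen_dense U hgrp hzero hcont
  rw [LinearPMap.isSelfAdjoint_def]
  refine le_antisymm ?_ ((stoneGen_symm U hzero hunitary).le_adjoint hD)
  have key : ∀ y : (stoneGen U).adjoint.domain, HasDerivAt (fun t : ℝ => U t (y : H))
      (Complex.I • (stoneGen U).adjoint y) 0 := fun y =>
    stoneGen_adjoint_hasDerivAt U hgrp hzero hunitary hcont y _
      (fun x => LinearPMap.adjoint_isFormalAdjoint hD y x)
  refine ⟨fun y hy => (key ⟨y, hy⟩).differentiableAt, ?_⟩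
  rintro y ⟨z, hz⟩ hyz
  have hyz' : (y : H) = z := hyz
  subst hyz'
  rw [stoneGen_eq U _ _ (key y) hz, smul_smul]
  simp

end StoneAux

/-- **Stone's theorem on one-parameter unitary groups**: a strongly continuous one-parameter
unitary group `(U_t)` on a complex Hilbert space has a densely defined self-adjoint generator
`A` with domain `D_A = {φ : lim_{ε→0} (U_ε φ - φ)/(iε) exists}`, `A φ = -i lim (U_ε φ - φ)/ε`
(equivalently the limit equals `i A φ`), each `U_t` preserves `D_A`, and on `D_A` the map
`t ↦ U_t φ` is differentiable with derivative `i A U_t φ`. -/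
theorem stone_theorem {H : Type} [NormedAddCommGroup H] [InnerProductSpace ℂ H]
    [CompleteSpace H]
    (U : ℝ → H →L[ℂ] H)
    (hgrp : ∀ s t : ℝ, U (s + t) = U s * U t) (hzero : U 0 = 1)
    (hunitary : ∀ (t : ℝ) (x y : H), ⟪U t x, U t y⟫_ℂ = ⟪x, y⟫_ℂ)
    (hcont : ∀ x : H, Continuous fun t : ℝ => U t x) :
    ∃ T : H →ₗ.[ℂ] H,
      (T.domain : Set H) =
        {φ : H | ∃ ψ : H, Filter.Tendsto (fun ε : ℝ => (ε : ℂ)⁻¹ • (U ε φ - φ))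
          (nhdsWithin (0 : ℝ) {0}ᶜ) (nhds ψ)} ∧
      Dense (T.domain : Set H) ∧
      IsSelfAdjoint T ∧
      (∀ (φ : H) (hφ : φ ∈ T.domain),
        Filter.Tendsto (fun ε : ℝ => (ε : ℂ)⁻¹ • (U ε φ - φ)) (nhdsWithin (0 : ℝ) {0}ᶜ)
          (nhds (Complex.I • T ⟨φ, hφ⟩))) ∧
      (∀ (t : ℝ) (φ : H), φ ∈ T.domain → U t φ ∈ T.domain) ∧
      (∀ (φ : H) (_ : φ ∈ T.domain) (t : ℝ) (ht : U t φ ∈ T.domain),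
        HasDerivAt (fun s : ℝ => U s φ) (Complex.I • T ⟨U t φ, ht⟩) t) := by
  refine ⟨stoneGen U, ?_, stoneGen_dense U hgrp hzero hcont,
    stoneGen_isSelfAdjoint U hgrp hzero hunitary hcont, ?_, ?_, ?_⟩
  · ext φ
    simp only [stone_tendsto_iff U hzero, Set.mem_setOf_eq, SetLike.mem_coe]
    exact ⟨fun h => ⟨_, DifferentiableAt.hasDerivAt h⟩, fun ⟨_, h⟩ => h.differentiableAt⟩
  · intro φ hφ
    exact (stone_tendsto_iff U hzero _ _).mpr (stoneGen_hasDerivAt U φ hφ)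
  · intro t φ hφ
    exact (stone_deriv_apply U hgrp _ _ (stoneGen_hasDerivAt U φ hφ) t).differentiableAt
  · intro φ hφ t ht
    have h1 := stone_deriv_apply U hgrp _ _ (stoneGen_hasDerivAt U φ hφ) t
    rw [(stoneGen_hasDerivAt U _ ht).unique h1]
    exact stone_deriv_shift U hgrp _ _ (stoneGen_hasDerivAt U φ hφ) t
end

section
/- Let A be a commutative unital C*-algebra, τ : ℝ → Aut(A) a one-parameter group of *-automorphisms, β ∈ ℝ with β ≠ 0, and φ a faithful (τ, β)-KMS state on A (faithful meaning φ(a*a) > 0 for all a ≠ 0). Then the automorphism group τ is trivial: τ_t(a) = a for all a ∈ A and t ∈ ℝ. -/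
open scoped ComplexOrder

/-- The open horizontal strip `D_β` between the real axis and the line `Im z = β`. -/
def kmsStrip (β : ℝ) : Set ℂ := {z : ℂ | z.im ∈ Set.Ioo (min 0 β) (max 0 β)}

/-- The KMS condition for a functional `φ`, a one-parameter family `τ` of maps and `β`. -/
def SatisfiesKMSCondition {A : Type} [NormedRing A] [NormedAlgebra ℂ A]
    (φ : A →L[ℂ] ℂ) (τ : ℝ → A → A) (β : ℝ) : Prop :=
  ∀ a b : A, ∃ F : ℂ → ℂ,
    ContinuousOn F (closure (kmsStrip β)) ∧
    (∃ C : ℝ, ∀ z ∈ closure (kmsStrip β), ‖F z‖ ≤ C) ∧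
    DifferentiableOn ℂ F (kmsStrip β) ∧
    (∀ t : ℝ, F t = φ (a * τ t b)) ∧
    (∀ t : ℝ, F (t + β * Complex.I) = φ (τ t b * a))

open Complex Set in
theorem kms_glue (G : ℂ → ℂ) (hc : Continuous G)
    (hd : ∀ z : ℂ, Int.fract z.im ≠ 0 → DifferentiableAt ℂ G z) : Differentiable ℂ G := by
  intro c
  by_cases h : Int.fract c.im = 0
  swap
  · exact hd c h
  obtain ⟨n, hn⟩ : ∃ n : ℤ, (n : ℝ) = c.im := by
    simpa [Int.fract_eq_zero_iff] using h
  have key : ∀ (a b y : ℝ), |y - c.im| < 1 →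
      (∫ x : ℝ in a..b, G (x + y * I)) - (∫ x : ℝ in a..b, G (x + c.im * I)) +
      I • (∫ y : ℝ in y..c.im, G (b + y * I)) -
      I • (∫ y : ℝ in y..c.im, G (a + y * I)) = 0 := by
    intro a b y hy
    have := integral_boundary_rect_eq_zero_of_continuousOn_of_differentiableOn G ⟨a, y⟩ ⟨b, c.im⟩
      hc.continuousOn ?_
    · simpa using this
    · intro z hz
      refine (hd z ?_).differentiableWithinAt
      have hz2 : z.im ∈ Ioo (min y c.im) (max y c.im) := hz.2
      rw [abs_lt] at hy
      intro h0
      obtain ⟨m, hm⟩ : ∃ m : ℤ, (m : ℝ) = z.im := by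
        simpa [Int.fract_eq_zero_iff] using h0
      rw [← hm, ← hn] at hz2
      rw [← hn] at hy
      rcases le_total y n with h1 | h1
      · rw [min_eq_left h1, max_eq_right h1] at hz2
        have a1 : m < n := by exact_mod_cast hz2.2
        have a2 : n - 1 < m := by
          have : ((n - 1 : ℤ) : ℝ) < m := by push_cast; linarith [hz2.1]
          exact_mod_cast this
        omega
      · rw [min_eq_right h1, max_eq_left h1] at hz2
        have a1 : n < m := by exact_mod_cast hz2.1
        have a2 : m < n + 1 := by
          have : (m : ℝ) < ((n + 1 : ℤ) : ℝ) := by push_cast; linarith [hz2.2]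
          exact_mod_cast this
        omega
  have hcons : IsConservativeOn G (Metric.ball c 1) := by
    intro z w hzw
    have him : ∀ u ∈ Metric.ball c 1, |u.im - c.im| < 1 := by
      intro u hu
      have := abs_im_le_norm (u - c)
      rw [mem_ball_iff_norm] at hu
      simp only [sub_im] at this
      linarith
    have hz := him z (hzw (by simp [Rectangle, mem_reProdIm]))
    have hw := him w (hzw (by simp [Rectangle, mem_reProdIm]))
    have k1 := key z.re w.re z.im hz
    have k2 := key z.re w.re w.im hw
    have ii : ∀ a p q : ℝ,
        IntervalIntegrable (fun y : ℝ => G (a + y * I)) MeasureTheory.volume p q :=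
      fun a p q => Continuous.intervalIntegrable (by fun_prop) _ _
    have s1 := intervalIntegral.integral_add_adjacent_intervals
      (ii w.re z.im w.im) (ii w.re w.im c.im)
    have s2 := intervalIntegral.integral_add_adjacent_intervals
      (ii z.re z.im w.im) (ii z.re w.im c.im)
    rw [← s1, ← s2] at k1
    rw [← add_eq_zero_iff_eq_neg, wedgeIntegral_add_wedgeIntegral_eq]
    simp only [smul_eq_mul] at k1 k2 ⊢
    linear_combination k1 - k2
  have := (isConservativeOn_and_continuousOn_iff_isDifferentiableOn
    (f := G) Metric.isOpen_ball).1 ⟨hcons, hc.continuousOn⟩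
  exact this.differentiableAt (Metric.ball_mem_nhds c one_pos)

open Complex Set in
theorem kms_liouville (H : ℂ → ℂ)
    (hc : ContinuousOn H {z | z.im ∈ Icc (0 : ℝ) 1})
    (hb : ∃ C : ℝ, ∀ z : ℂ, z.im ∈ Icc (0 : ℝ) 1 → ‖H z‖ ≤ C)
    (hd : ∀ z : ℂ, z.im ∈ Ioo (0 : ℝ) 1 → DifferentiableAt ℂ H z)
    (hp : ∀ t : ℝ, H t = H (t + I)) (t : ℝ) : H t = H 0 := by
  obtain ⟨C, hC⟩ := hb
  set G : ℂ → ℂ := fun z => H (z.re + (Int.fract z.im : ℝ) * I) with hG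
  have hGc : Continuous G := by
    refine ContinuousOn.comp_fract (f := fun (z : ℂ) (u : ℝ) => H (z.re + u * I))
      (s := fun z => z.im) ?_ continuous_im ?_
    · refine hc.comp (f := fun p : ℂ × ℝ => (p.1.re + p.2 * I : ℂ)) (by fun_prop) ?_
      intro p hp
      simpa using hp.2
    · intro s
      simpa using hp s.re
  have hGd : Differentiable ℂ G := by
    refine kms_glue G hGc ?_
    intro z hz
    have hpos : 0 < Int.fract z.im := lt_of_le_of_ne (Int.fract_nonneg _) (Ne.symm hz)
    have h1 : DifferentiableAt ℂ (fun w : ℂ => H (w - ⌊z.im⌋ * I)) z := by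
      have : DifferentiableAt ℂ H (z - ⌊z.im⌋ * I) := by
        apply hd
        have : (z - ⌊z.im⌋ * I).im = Int.fract z.im := by simp
        rw [this]
        exact ⟨hpos, Int.fract_lt_one _⟩
      exact DifferentiableAt.comp z (f := fun w : ℂ => w - ⌊z.im⌋ * I) this (by fun_prop)
    refine h1.congr_of_eventuallyEq ?_
    have hev : ∀ᶠ w : ℂ in nhds z, w.im ∈ Ioo (⌊z.im⌋ : ℝ) (⌊z.im⌋ + 1) := by
      refine continuous_im.continuousAt.eventually (Ioo_mem_nhds ?_ (Int.lt_floor_add_one _))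
      have := Int.floor_add_fract z.im
      linarith
    filter_upwards [hev] with w hw
    have hf : ⌊w.im⌋ = ⌊z.im⌋ := Int.floor_eq_iff.2 ⟨hw.1.le, hw.2⟩
    simp only [hG]
    congr 1
    apply Complex.ext <;> simp [← hf]
  have hGb : Bornology.IsBounded (range G) := by
    rw [isBounded_iff_forall_norm_le]
    refine ⟨C, ?_⟩
    rintro _ ⟨z, rfl⟩
    apply hC
    simpa using (Int.fract_lt_one z.im).le
  have := hGd.apply_eq_apply_of_bounded hGb t 0
  simpa [hG] using this

/-- A faithful `(τ, β)`-KMS state on a **commutative** unital C*-algebra forces the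
one-parameter automorphism group `τ` to be trivial. -/
theorem kms_on_commutative_algebra_trivial {A : Type} [CommCStarAlgebra A]
    (τ : ℝ → A ≃⋆ₐ[ℂ] A)
    (hτ0 : ∀ a : A, τ 0 a = a)
    (hτadd : ∀ (s t : ℝ) (a : A), τ s (τ t a) = τ (s + t) a)
    (β : ℝ) (hβ : β ≠ 0)
    (φ : A →L[ℂ] ℂ)
    (hpos : ∀ a : A, 0 ≤ φ (star a * a)) (hnorm : ‖φ‖ = 1) (hone : φ 1 = 1)
    (hfaithful : ∀ a : A, a ≠ 0 → 0 < φ (star a * a))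
    (hkms : SatisfiesKMSCondition φ (fun t a => τ t a) β) :
    ∀ (t : ℝ) (a : A), τ t a = a := by
  have hopen : IsOpen (kmsStrip β) := isOpen_Ioo.preimage Complex.continuous_im
  have hin : ∀ z : ℂ, z.im ∈ Set.Ioo (0 : ℝ) 1 → (β : ℂ) * z ∈ kmsStrip β := by
    intro z hz
    simp only [kmsStrip, Set.mem_setOf_eq, Complex.re_ofReal_mul, Complex.im_ofReal_mul]
    rcases lt_or_gt_of_ne hβ with h | h
    · rw [min_eq_right h.le, max_eq_left h.le]
      constructor <;> nlinarith [hz.1, hz.2]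
    · rw [min_eq_left h.le, max_eq_right h.le]
      constructor <;> nlinarith [hz.1, hz.2]
  have hcl : ∀ z : ℂ, z.im ∈ Set.Icc (0 : ℝ) 1 → (β : ℂ) * z ∈ closure (kmsStrip β) := by
    intro z hz
    have h1 : z ∈ closure {w : ℂ | w.im ∈ Set.Ioo (0 : ℝ) 1} := by
      have : closure (Complex.im ⁻¹' Set.Ioo (0 : ℝ) 1) = Complex.im ⁻¹' closure (Set.Ioo (0 : ℝ) 1) :=
        Complex.closure_preimage_im _
      rw [closure_Ioo (by norm_num)] at this
      exact this.symm ▸ hz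
    exact map_mem_closure (f := fun w : ℂ => (β : ℂ) * w) (by fun_prop) h1 (fun w hw => hin w hw)
  have key : ∀ (t : ℝ) (a b : A), φ (a * τ t b) = φ (a * b) := by
    intro t a b
    obtain ⟨F, hFc, ⟨C, hC⟩, hFd, h0, h1⟩ := hkms a b
    have := kms_liouville (fun z => F (β * z)) ?_ ⟨C, fun z hz => hC _ (hcl z hz)⟩ ?_ ?_ (t / β)
    · have e : (β : ℂ) * ((t / β : ℝ) : ℂ) = (t : ℂ) := by
        push_cast
        field_simp [Complex.ofReal_ne_zero.2 hβ]
      simp only [e, mul_zero] at this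
      have e0 := h0 0
      simp only [Complex.ofReal_zero, hτ0] at e0
      rw [← h0 t, this, e0]
    · exact hFc.comp (by fun_prop) (fun z hz => hcl z hz)
    · intro z hz
      exact DifferentiableAt.comp z (f := fun w : ℂ => (β : ℂ) * w)
        (hFd.differentiableAt (hopen.mem_nhds (hin z hz))) (by fun_prop)
    · intro s
      have a1 := h0 (β * s)
      have a2 := h1 (β * s)
      push_cast at a1 a2
      simp only [mul_add]
      rw [a1, a2, mul_comm]
  intro t a
  by_contra hne
  have h := hfaithful (τ t a - a) (sub_ne_zero.2 hne)
  rw [mul_sub, map_sub, key, sub_self] at h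
  exact lt_irrefl _ h
end

section
/- Birkhoff's pointwise ergodic theorem: Let (X, Σ, μ) be a probability space, T : X → X a measure-preserving transformation that is ergodic with respect to μ, and f ∈ L¹(X, μ). Then for μ-almost every x ∈ X, the time averages converge to the space average: lim_{n→∞} (1/n) Σ_{i=0}^{n−1} f(Tⁱ(x)) = ∫_X f dμ. -/
open MeasureTheory

/-- Running maxima of Birkhoff sums, defined recursively. -/
noncomputable def birkMax {X : Type} (T : X → X) (g : X → ℝ) : ℕ → X → ℝ
  | 0 => fun _ => 0
  | n + 1 => fun x => max 0 (g x + birkMax T g n (T x))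

theorem birkMax_succ {X : Type} (T : X → X) (g : X → ℝ) (n : ℕ) (x : X) :
    birkMax T g (n + 1) x = max 0 (g x + birkMax T g n (T x)) := rfl

theorem birkMax_nonneg {X : Type} (T : X → X) (g : X → ℝ) (n : ℕ) (x : X) :
    0 ≤ birkMax T g n x := by
  cases n with
  | zero => exact le_refl _
  | succ n => exact le_max_left _ _

theorem birkMax_le_succ {X : Type} (T : X → X) (g : X → ℝ) (n : ℕ) :
    ∀ x, birkMax T g n x ≤ birkMax T g (n + 1) x := by
  induction n with
  | zero => intro x; exact birkMax_nonneg T g 1 x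
  | succ n ih =>
    intro x
    rw [birkMax_succ, birkMax_succ T g (n + 1)]
    exact max_le_max le_rfl (by linarith [ih (T x)])

theorem birkMax_mono {X : Type} (T : X → X) (g : X → ℝ) (x : X) :
    Monotone (fun n => birkMax T g n x) :=
  monotone_nat_of_le_succ (fun n => birkMax_le_succ T g n x)

theorem sum_le_birkMax {X : Type} (T : X → X) (g : X → ℝ) (n : ℕ) :
    ∀ x, ∑ i ∈ Finset.range n, g (T^[i] x) ≤ birkMax T g n x := by
  induction n with
  | zero => intro x; simp [birkMax]
  | succ n ih =>
    intro x
    rw [Finset.sum_range_succ', birkMax_succ]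
    refine le_trans ?_ (le_max_right _ _)
    have := ih (T x)
    simp only [Function.iterate_succ_apply, Function.iterate_zero_apply]
    linarith

theorem birkMax_measurable {X : Type} [MeasurableSpace X] {T : X → X} {g : X → ℝ}
    (hT : Measurable T) (hg : Measurable g) (n : ℕ) : Measurable (birkMax T g n) := by
  induction n with
  | zero => exact measurable_const
  | succ n ih => exact measurable_const.max (hg.add (ih.comp hT))

theorem birkMax_integrable {X : Type} [MeasurableSpace X] {μ : Measure X} {T : X → X} {g : X → ℝ}
    (hT : MeasurePreserving T μ μ) (hg : Integrable g μ) (n : ℕ) :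
    Integrable (birkMax T g n) μ := by
  induction n with
  | zero => exact integrable_zero _ _ _
  | succ n ih =>
    have h : Integrable (fun x => g x + birkMax T g n (T x)) μ :=
      hg.add (hT.integrable_comp_of_integrable ih)
    exact (integrable_zero X ℝ μ).sup h

theorem birkMax_ae_bdd {X : Type} [MeasurableSpace X] {μ : Measure X} [IsProbabilityMeasure μ]
    {T : X → X} (hT : Ergodic T μ) {g : X → ℝ} (hgm : Measurable g) (hg : Integrable g μ)
    (hneg : ∫ x, g x ∂μ < 0) :
    ∀ᵐ x ∂μ, BddAbove (Set.range fun n => birkMax T g n x) := by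
  have hmp := hT.toMeasurePreserving
  set A : Set X := {x | BddAbove (Set.range fun n => birkMax T g n x)} with hA
  have hAm : MeasurableSet A :=
    measurableSet_bddAbove_range (fun n => birkMax_measurable hmp.measurable hgm n)
  have hinv : T ⁻¹' A = A := by
    ext x
    simp only [hA, Set.mem_preimage, Set.mem_setOf_eq]
    constructor
    · rintro ⟨C, hC⟩
      refine ⟨max 0 (g x + C), ?_⟩
      rintro _ ⟨n, rfl⟩
      refine (birkMax_le_succ T g n x).trans ?_
      rw [birkMax_succ]
      have : birkMax T g n (T x) ≤ C := hC ⟨n, rfl⟩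
      exact max_le_max le_rfl (by linarith)
    · rintro ⟨C, hC⟩
      refine ⟨C - g x, ?_⟩
      rintro _ ⟨n, rfl⟩
      have h1 : birkMax T g (n + 1) x ≤ C := hC ⟨n + 1, rfl⟩
      rw [birkMax_succ] at h1
      have := (le_max_right _ _).trans h1
      show birkMax T g n (T x) ≤ C - g x
      linarith
  rcases hT.toPreErgodic.ae_mem_or_ae_notMem hAm hinv with h | h
  · exact h
  exfalso
  have hi := fun n => birkMax_integrable hmp hg n
  have hiT : ∀ n, Integrable (fun x => birkMax T g n (T x)) μ :=
    fun n => hmp.integrable_comp_of_integrable (hi n)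
  have hlim : Filter.Tendsto
      (fun n => ∫ x, (birkMax T g (n + 1) x - birkMax T g n (T x)) ∂μ) Filter.atTop
      (nhds (∫ x, g x ∂μ)) := by
    refine tendsto_integral_of_dominated_convergence (fun x => |g x|) ?_ hg.abs ?_ ?_
    · exact fun n => ((hi (n + 1)).sub (hiT n)).aestronglyMeasurable
    · intro n
      refine Filter.Eventually.of_forall fun x => ?_
      have h0 := birkMax_nonneg T g n (T x)
      rw [birkMax_succ, Real.norm_eq_abs, abs_le]
      have h1 := neg_abs_le (g x)
      have h2 := le_abs_self (g x)
      have h3 := abs_nonneg (g x)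
      constructor
      · linarith [le_max_right 0 (g x + birkMax T g n (T x))]
      · rcases max_cases 0 (g x + birkMax T g n (T x)) with h | h <;> linarith
    · filter_upwards [h] with x hx
      have hx' : T x ∉ A := by
        intro h'
        exact hx (by rw [← hinv]; exact h')
      have hev : ∀ᶠ n in Filter.atTop, -g x ≤ birkMax T g n (T x) := by
        have : ∃ n, -g x ≤ birkMax T g n (T x) := by
          by_contra hcon
          push Not at hcon
          apply hx'
          refine ⟨-g x, ?_⟩
          rintro _ ⟨n, rfl⟩
          exact (hcon n).le
        obtain ⟨N, hN⟩ := this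
        filter_upwards [Filter.eventually_ge_atTop N] with n hn
        exact hN.trans (birkMax_mono T g (T x) hn)
      refine tendsto_const_nhds.congr' ?_
      filter_upwards [hev] with n hn
      rw [birkMax_succ, max_eq_right (by linarith)]
      ring
  have : 0 ≤ ∫ x, g x ∂μ := by
    refine ge_of_tendsto' hlim fun n => ?_
    have e : ∫ x, birkMax T g n (T x) ∂μ = ∫ x, birkMax T g n x ∂μ := by
      have := integral_map (μ := μ) hmp.measurable.aemeasurable (f := birkMax T g n)
        (by rw [hmp.map_eq]; exact (hi n).aestronglyMeasurable)
      rw [hmp.map_eq] at this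
      exact this.symm
    rw [integral_sub (hi (n + 1)) (hiT n), e, sub_nonneg]
    exact integral_mono (hi n) (hi (n + 1)) (birkMax_le_succ T g n)
  linarith

theorem birk_upper {X : Type} [MeasurableSpace X] {μ : Measure X} [IsProbabilityMeasure μ]
    {T : X → X} (hT : Ergodic T μ) {f : X → ℝ} (hfm : Measurable f) (hf : Integrable f μ)
    {c : ℝ} (hc : ∫ x, f x ∂μ < c) :
    ∀ᵐ x ∂μ, ∀ᶠ n : ℕ in Filter.atTop,
      (n : ℝ)⁻¹ * ∑ i ∈ Finset.range n, f (T^[i] x) < c := by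
  obtain ⟨d, hd, hdc⟩ := exists_between hc
  have hneg : ∫ x, (f x - d) ∂μ < 0 := by
    rw [integral_sub hf (integrable_const _)]
    simpa using hd
  filter_upwards [birkMax_ae_bdd hT (hfm.sub_const d) (hf.sub (integrable_const d)) hneg] with x hx
  obtain ⟨C, hC⟩ := hx
  obtain ⟨N, hN⟩ := exists_nat_gt (C / (c - d))
  filter_upwards [Filter.eventually_ge_atTop N, Filter.eventually_gt_atTop 0] with n hn hn0
  have h1 : ∑ i ∈ Finset.range n, (f (T^[i] x) - d) ≤ C :=
    (sum_le_birkMax T (fun x => f x - d) n x).trans (hC ⟨n, rfl⟩)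
  rw [Finset.sum_sub_distrib] at h1
  simp only [Finset.sum_const, Finset.card_range, nsmul_eq_mul] at h1
  have hn' : (0 : ℝ) < n := by exact_mod_cast hn0
  have hNn : (N : ℝ) ≤ n := by exact_mod_cast hn
  have h2 : C < n * (c - d) := by
    rw [← div_lt_iff₀ (by linarith)]
    linarith
  rw [inv_mul_lt_iff₀ hn']
  linarith

theorem birk_measurable {X : Type} [MeasurableSpace X] {μ : Measure X} [IsProbabilityMeasure μ]
    {T : X → X} (hT : Ergodic T μ) {f : X → ℝ} (hfm : Measurable f) (hf : Integrable f μ) :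
    ∀ᵐ x ∂μ, Filter.Tendsto
      (fun n : ℕ => (n : ℝ)⁻¹ * ∑ i ∈ Finset.range n, f (T^[i] x))
      Filter.atTop (nhds (∫ x, f x ∂μ)) := by
  have hup : ∀ᵐ x ∂μ, ∀ k : ℕ, ∀ᶠ n : ℕ in Filter.atTop,
      (n : ℝ)⁻¹ * ∑ i ∈ Finset.range n, f (T^[i] x) < ∫ x, f x ∂μ + 1 / ((k : ℝ) + 1) :=
    ae_all_iff.2 fun k => birk_upper hT hfm hf (lt_add_of_pos_right _ Nat.one_div_pos_of_nat)
  have hlo : ∀ᵐ x ∂μ, ∀ k : ℕ, ∀ᶠ n : ℕ in Filter.atTop,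
      (n : ℝ)⁻¹ * ∑ i ∈ Finset.range n, (-f) (T^[i] x) < ∫ x, (-f) x ∂μ + 1 / ((k : ℝ) + 1) :=
    ae_all_iff.2 fun k => birk_upper hT hfm.neg hf.neg
      (lt_add_of_pos_right _ Nat.one_div_pos_of_nat)
  filter_upwards [hup, hlo] with x h1 h2
  rw [Metric.tendsto_nhds]
  intro ε hε
  obtain ⟨k, hk⟩ := exists_nat_one_div_lt hε
  filter_upwards [h1 k, h2 k] with n h1 h2
  simp only [Pi.neg_apply, Finset.sum_neg_distrib, integral_neg, mul_neg] at h2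
  rw [Real.dist_eq, abs_lt]
  constructor <;> linarith

/-- **Birkhoff's pointwise ergodic theorem**: for an ergodic measure-preserving
transformation `T` of a probability space and `f ∈ L¹(μ)`, the time averages
`(1/n) Σ_{i<n} f(Tⁱ x)` converge to the space average `∫ f dμ` for almost every `x`. -/
theorem birkhoff_pointwise_ergodic_theorem {X : Type} [MeasurableSpace X]
    {μ : Measure X} [IsProbabilityMeasure μ]
    {T : X → X} (hT : Ergodic T μ)
    {f : X → ℝ} (hf : Integrable f μ) :
    ∀ᵐ x ∂μ, Filter.Tendsto
      (fun n : ℕ => (n : ℝ)⁻¹ * ∑ i ∈ Finset.range n, f (T^[i] x))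
      Filter.atTop (nhds (∫ x, f x ∂μ)) := by
  have hae := hf.1.ae_eq_mk
  have hg : Integrable (hf.1.mk f) μ := hf.congr hae
  have hall : ∀ᵐ x ∂μ, ∀ i : ℕ, f (T^[i] x) = hf.1.mk f (T^[i] x) :=
    ae_all_iff.2 fun i =>
      (hT.toMeasurePreserving.iterate i).quasiMeasurePreserving.ae hae
  filter_upwards [hall, birk_measurable hT hf.1.stronglyMeasurable_mk.measurable hg] with x h1 h2
  rw [integral_congr_ae hae]
  simpa only [h1] using h2
end

section
/- Kac's lemma: Let (X, Σ, μ) be a probability space and T : X → X an invertible, ergodic, measure-preserving transformation. Let A ∈ Σ with μ(A) > 0 and define the first return time τ_A(x) = inf{n ≥ 1 : Tⁿ(x) ∈ A} for x ∈ A (which is finite for μ-a.e. x ∈ A). Then ∫_A τ_A dμ = 1; in particular, the conditional expectation of the return time is E[τ_A | A] = (1/μ(A)) ∫_A τ_A dμ = 1/μ(A). -/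
open MeasureTheory
open scoped ENNReal

/-- The first return time to `A` under `T`: `τ_A(x) = inf {n ≥ 1 : Tⁿ(x) ∈ A}`
(with the convention `sInf ∅ = 0`). -/
noncomputable def firstReturnTime {X : Type} (T : X → X) (A : Set X) (x : X) : ℕ :=
  sInf {n : ℕ | 1 ≤ n ∧ T^[n] x ∈ A}

/-- **Kac's lemma**: for an invertible ergodic measure-preserving transformation `T` of a
probability space and a set `A` of positive measure, the first return time `τ_A` is a.e.
finite on `A`, `∫_A τ_A dμ = 1`, and the conditional expectation of the return time is
`E[τ_A | A] = (1/μ(A)) ∫_A τ_A dμ = 1/μ(A)`. -/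
theorem kac_lemma {X : Type} [MeasurableSpace X] {μ : Measure X} [IsProbabilityMeasure μ]
    (T : X ≃ᵐ X) (hT : Ergodic (⇑T) μ)
    (A : Set X) (hA : MeasurableSet A) (hA0 : 0 < μ A) :
    (∀ᵐ x ∂μ, x ∈ A → {n : ℕ | 1 ≤ n ∧ (⇑T)^[n] x ∈ A}.Nonempty) ∧
    ∫⁻ x in A, (firstReturnTime (⇑T) A x : ℝ≥0∞) ∂μ = 1 ∧
    (μ A)⁻¹ * ∫⁻ x in A, (firstReturnTime (⇑T) A x : ℝ≥0∞) ∂μ = (μ A)⁻¹ := by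
  classical
  set B : ℕ → Set X := fun n => {x | ∀ k < n, (⇑T)^[k] x ∉ A} with hB
  set U : ℕ → Set X := fun n => (⇑T) ⁻¹' (B n) with hU
  have hmp := hT.toMeasurePreserving
  have hBm : ∀ n, MeasurableSet (B n) := by
    intro n
    have : B n = ⋂ k, ⋂ (_ : k < n), ((⇑T)^[k] ⁻¹' A)ᶜ := by
      ext x; simp [hB]
    rw [this]
    exact MeasurableSet.iInter fun k => MeasurableSet.iInter fun _ =>
      ((T.measurable.iterate k) hA).compl
  have hUm : ∀ n, MeasurableSet (U n) := fun n => T.measurable (hBm n)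
  have hmu : ∀ n, μ (U n) = μ (B n) := fun n =>
    hmp.measure_preimage (hBm n).nullMeasurableSet
  have hBU : ∀ n, B (n + 1) = U n \ A := by
    intro n
    ext x
    constructor
    · intro h
      refine ⟨fun k hk => ?_, h 0 (Nat.succ_pos n)⟩
      exact h (k + 1) (Nat.succ_lt_succ hk)
    · rintro ⟨h, h0⟩ k hk
      cases k with
      | zero => exact h0
      | succ k => exact h k (Nat.lt_of_succ_lt_succ hk)
  have hstep : ∀ n, μ (A ∩ U n) + μ (B (n + 1)) = μ (B n) := by
    intro n
    rw [hBU, ← hmu n, Set.inter_comm]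
    exact measure_inter_add_sdiff _ hA
  have hsum : ∀ N, ∑ n ∈ Finset.range N, μ (A ∩ U n) + μ (B N) = 1 := by
    intro N
    induction N with
    | zero => simp [hB]
    | succ N ih => rw [Finset.sum_range_succ, add_assoc, hstep, ih]
  have hB0 : μ (⋂ n, B n) = 0 := by
    have hm : MeasurableSet (⋂ n, B n) := MeasurableSet.iInter hBm
    have hsub : (⋂ n, B n) ⊆ (⇑T) ⁻¹' (⋂ n, B n) := by
      intro x hx
      simp only [Set.mem_preimage, Set.mem_iInter] at hx ⊢
      intro n k hk
      exact hx (n + 1) (k + 1) (Nat.succ_lt_succ hk)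
    rcases hT.ae_empty_or_univ_of_ae_le_preimage hm.nullMeasurableSet
      (Filter.Eventually.of_forall hsub) with h | h
    · exact ae_eq_empty.1 h
    · exfalso
      have h1 : μ (⋂ n, B n)ᶜ = 0 := ae_eq_univ.1 h
      have h2 : A ⊆ (⋂ n, B n)ᶜ := by
        intro x hx hx'
        exact (Set.mem_iInter.1 hx' 1) 0 Nat.one_pos hx
      exact hA0.ne' (measure_mono_null h2 h1)
  have hae : ∀ᵐ x ∂μ, {n : ℕ | 1 ≤ n ∧ (⇑T)^[n] x ∈ A}.Nonempty := by
    have h1 : ∀ᵐ x ∂μ, x ∉ ⋂ n, B n := measure_eq_zero_iff_ae_notMem.1 hB0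
    have h2 : ∀ᵐ x ∂μ, T x ∉ ⋂ n, B n := hmp.quasiMeasurePreserving.ae h1
    filter_upwards [h2] with x hx
    by_contra hne
    apply hx
    refine Set.mem_iInter.2 fun n k _ hk => hne ⟨k + 1, Nat.succ_pos k, hk⟩
  have hlim : Filter.Tendsto (fun n => μ (B n)) Filter.atTop (nhds 0) := by
    rw [← hB0]
    refine tendsto_measure_iInter_atTop (fun n => (hBm n).nullMeasurableSet) ?_
      ⟨0, measure_ne_top _ _⟩
    intro m n hmn x hx k hk
    exact hx k (lt_of_lt_of_le hk hmn)
  have htsum : ∑' n, μ (A ∩ U n) = 1 := by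
    have h1 := (ENNReal.tendsto_nat_tsum (fun n => μ (A ∩ U n))).add hlim
    simp only [hsum, add_zero] at h1
    exact tendsto_nhds_unique h1 tendsto_const_nhds
  have hpt : ∀ x, {n : ℕ | 1 ≤ n ∧ (⇑T)^[n] x ∈ A}.Nonempty →
      (firstReturnTime (⇑T) A x : ℝ≥0∞) = ∑' n, (U n).indicator 1 x := by
    intro x hx
    have hmem : ∀ n, x ∈ U n ↔ n < firstReturnTime (⇑T) A x := by
      intro n
      constructor
      · intro h
        by_contra hn
        obtain ⟨ha, hb⟩ := Nat.sInf_mem hx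
        change 1 ≤ firstReturnTime (⇑T) A x at ha
        change (⇑T)^[firstReturnTime (⇑T) A x] x ∈ A at hb
        obtain ⟨k, hk⟩ := Nat.exists_eq_add_of_le' ha
        rw [hk] at hb hn
        exact h k (by omega) hb
      · intro h k hk hkA
        have : firstReturnTime (⇑T) A x ≤ k + 1 := Nat.sInf_le ⟨Nat.succ_pos k, hkA⟩
        omega
    rw [tsum_eq_sum (s := Finset.range (firstReturnTime (⇑T) A x))]
    · rw [Finset.sum_congr rfl (g := fun _ => (1 : ℝ≥0∞))]
      · simp
      · intro n hn
        exact Set.indicator_of_mem ((hmem n).2 (Finset.mem_range.1 hn)) _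
    · intro n hn
      exact Set.indicator_of_notMem (fun h => hn (Finset.mem_range.2 ((hmem n).1 h))) _
  have hint : ∫⁻ x in A, (firstReturnTime (⇑T) A x : ℝ≥0∞) ∂μ = 1 := by
    rw [lintegral_congr_ae (g := fun x => ∑' n, (U n).indicator 1 x)
      ((ae_restrict_of_ae hae).mono hpt)]
    rw [lintegral_tsum fun n => (measurable_one.indicator (hUm n)).aemeasurable, ← htsum]
    congr 1
    ext n
    rw [lintegral_indicator_one (hUm n), Measure.restrict_apply (hUm n), Set.inter_comm]
  exact ⟨hae.mono fun x hx _ => hx, hint, by rw [hint, mul_one]⟩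
end

section
/- Feldman–Moore theorem: Let X be a standard Borel space and R ⊆ X × X a Borel equivalence relation all of whose equivalence classes are countable. Then there exist a countable group G and a Borel action of G on X (each map x ↦ g·x being Borel) such that R is the orbit equivalence relation of this action: R = {(x, g·x) : x ∈ X, g ∈ G}. -/
open Set MeasureTheory Filter Topology

/-- A countable family of Borel sets on each of which `f` is injective. -/
def FMGood {F X : Type} [MeasurableSpace F] (f : F → X) (E : Set (Set F)) : Prop :=
  E.Countable ∧ ∀ e ∈ E, MeasurableSet e ∧ InjOn f e

/-- A tuple of sets whose images still have a common point after removing any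
countable union of Borel sets on which `f` is injective. -/
def FMBig {F X : Type} [MeasurableSpace F] (f : F → X) {ι : Type} (U : ι → Set F) : Prop :=
  ∀ E, FMGood f E → ∃ x, ∀ i, ∃ z ∈ U i, z ∉ ⋃₀ E ∧ f z = x

lemma fm_analytic_inter {X : Type} [TopologicalSpace X] [T2Space X] {A B : Set X}
    (hA : AnalyticSet A) (hB : AnalyticSet B) : AnalyticSet (A ∩ B) := by
  rw [inter_eq_iInter]
  apply AnalyticSet.iInter
  intro b
  cases b <;> assumption

/-- Lusin separation for finitely many analytic sets. -/
lemma fm_separation {X ι : Type} [TopologicalSpace X] [PolishSpace X] [MeasurableSpace X]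
    [BorelSpace X] (A : ι → Set X) (hA : ∀ i, AnalyticSet (A i)) (s : Finset ι) :
    ∀ D : Set X, AnalyticSet D → (∀ x ∈ D, ∃ i ∈ s, x ∉ A i) →
    ∃ (C : ι → Set X) (D' : Set X), (∀ i, MeasurableSet (C i)) ∧ (∀ i, A i ⊆ C i) ∧
      MeasurableSet D' ∧ D ⊆ D' ∧ ∀ x ∈ D', ∃ i ∈ s, x ∉ C i := by
  classical
  induction s using Finset.induction_on with
  | empty =>
    intro D _ h
    refine ⟨fun _ => univ, ∅, fun _ => .univ, fun _ => subset_univ _, .empty, ?_, by simp⟩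
    intro x hx
    simpa using h x hx
  | insert a s ha ih =>
    intro D hD h
    obtain ⟨C, E, hC, hAC, hE, hDE, hemp⟩ := ih (D ∩ A a) (fm_analytic_inter hD (hA a)) (by
      rintro x ⟨hx, hxa⟩
      obtain ⟨i, hi, hxi⟩ := h x hx
      rcases Finset.mem_insert.1 hi with rfl | hi
      · exact absurd hxa hxi
      · exact ⟨i, hi, hxi⟩)
    obtain ⟨S, hS1, hS2, hS⟩ := AnalyticSet.measurablySeparable
      (fm_analytic_inter hD hE.compl.analyticSet)
      (fm_analytic_inter (hA a) hE.compl.analyticSet) (by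
        rw [Set.disjoint_left]
        rintro x ⟨hx, hxE⟩ ⟨hxa, _⟩
        exact hxE (hDE ⟨hx, hxa⟩))
    rw [Set.disjoint_left] at hS2
    refine ⟨Function.update C a (Sᶜ ∪ E), S ∪ E, ?_, ?_, hS.union hE, ?_, ?_⟩
    · intro i
      by_cases hi : i = a
      · subst hi; simpa using hS.compl.union hE
      · simpa [hi] using hC i
    · intro i
      by_cases hi : i = a
      · subst hi
        intro x hx
        simp only [Function.update_self]
        by_cases hxE : x ∈ E
        · exact Or.inr hxE
        · exact Or.inl (hS2 ⟨hx, hxE⟩)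
      · simpa [hi] using hAC i
    · intro x hx
      by_cases hxE : x ∈ E
      · exact Or.inr hxE
      · exact Or.inl (hS1 ⟨hx, hxE⟩)
    · intro x hx
      by_cases hxE : x ∈ E
      · obtain ⟨i, hi, hxi⟩ := hemp x hxE
        refine ⟨i, Finset.mem_insert_of_mem hi, ?_⟩
        have : i ≠ a := by rintro rfl; exact ha hi
        simpa [this] using hxi
      · refine ⟨a, Finset.mem_insert_self _ _, ?_⟩
        have : x ∈ S := hx.resolve_right hxE
        simp [this, hxE]

/-- The splitting step. -/
lemma fm_split {F X ι : Type} [MetricSpace F] [PolishSpace F] [MeasurableSpace F]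
    [BorelSpace F] [TopologicalSpace X] [PolishSpace X] [MeasurableSpace X]
    [BorelSpace X] [Finite ι] (f : F → X) (hf : Measurable f) (U : ι → Set F)
    (hU : ∀ i, IsClosed (U i)) (hbig : FMBig f U) (δ : ℝ) (hδ : 0 < δ) :
    ∃ V : ι × Bool → Set F, (∀ j, IsClosed (V j)) ∧ FMBig f V ∧ (∀ j, V j ⊆ U j.1) ∧
      (∀ j, ∀ y ∈ V j, ∀ z ∈ V j, dist y z ≤ δ) ∧ ∀ i, Disjoint (V (i, false)) (V (i, true)) := by
  classical
  have := Fintype.ofFinite ι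
  have hne : Nonempty F ∨ IsEmpty ι := by
    by_cases h : IsEmpty ι
    · exact Or.inr h
    · rw [not_isEmpty_iff] at h
      obtain ⟨i⟩ := h
      obtain ⟨x, hx⟩ := hbig ∅ ⟨countable_empty, by simp⟩
      obtain ⟨z, -⟩ := hx i
      exact Or.inl ⟨z⟩
  rcases hne with hne | hemp
  swap
  · refine ⟨fun _ => ∅, fun _ => isClosed_empty, ?_, ?_, ?_, ?_⟩
    · intro E hE
      obtain ⟨x, hx⟩ := hbig E hE
      exact ⟨x, fun j => (hemp.false j.1).elim⟩
    · exact fun j => (hemp.false j.1).elim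
    · exact fun j => (hemp.false j.1).elim
    · exact fun j => (hemp.false j).elim
  let d := TopologicalSpace.denseSeq F
  let ball : ℕ × ℕ → Set F := fun t => Metric.closedBall (d t.1) (δ / 2 / ((t.2 : ℝ) + 1))
  let T := {t : (ℕ × ℕ) × (ℕ × ℕ) // Disjoint (ball t.1) (ball t.2)}
  let V : (ι → T) → ι × Bool → Set F := fun c j =>
    U j.1 ∩ (if j.2 then ball (c j.1).1.1 else ball (c j.1).1.2)
  by_contra hcon
  have hsmall : ∀ c : ι → T, ∃ E, FMGood f E ∧
      ∀ x, ∃ j, ∀ z ∈ V c j, z ∉ ⋃₀ E → f z ≠ x := by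
    intro c
    by_contra hc
    apply hcon
    refine ⟨V c, ?_, ?_, fun j => inter_subset_left, ?_, ?_⟩
    · intro j
      refine (hU _).inter ?_
      split_ifs <;> exact Metric.isClosed_closedBall
    · intro E hE
      by_contra h
      apply hc
      refine ⟨E, hE, ?_⟩
      push Not at h
      exact h
    · have key : ∀ t, ∀ y ∈ ball t, ∀ z ∈ ball t, dist y z ≤ δ := by
        intro t y hy z hz
        have h1 : dist y (d t.1) ≤ _ := hy
        have h2 : dist z (d t.1) ≤ _ := hz
        have h3 : δ / 2 / ((t.2 : ℝ) + 1) ≤ δ / 2 := by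
          apply div_le_self (by positivity)
          have : (0 : ℝ) ≤ t.2 := Nat.cast_nonneg _
          linarith
        have := dist_triangle_right y z (d t.1)
        linarith
      rintro ⟨i, b⟩ y ⟨_, hy⟩ z ⟨_, hz⟩
      cases b
      · exact key _ y (by simpa using hy) z (by simpa using hz)
      · exact key _ y (by simpa using hy) z (by simpa using hz)
    · intro i
      refine Disjoint.mono inter_subset_right inter_subset_right ?_
      simpa using (c i).2.symm
  choose E hE hEx using hsmall
  let B : Set (Set F) := ⋃ c, E c
  have hB : FMGood f B := by
    refine ⟨countable_iUnion fun c => (hE c).1, ?_⟩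
    intro e he
    obtain ⟨c, hc⟩ := mem_iUnion.1 he
    exact (hE c).2 e hc
  have hBm : MeasurableSet (⋃₀ B) := MeasurableSet.sUnion hB.1 fun e he => (hB.2 e he).1
  let U' : ι → Set F := fun i => U i \ ⋃₀ B
  have hU'm : ∀ i, MeasurableSet (U' i) := fun i => (hU i).measurableSet.diff hBm
  let A : ι → Set X := fun i => {x | ∃ z ∈ U' i, ∃ z' ∈ U' i, z ≠ z' ∧ f z = x ∧ f z' = x}
  have hA : ∀ i, AnalyticSet (A i) := by
    intro i
    have hm : MeasurableSet {p : F × F | p.1 ∈ U' i ∧ p.2 ∈ U' i ∧ p.1 ≠ p.2 ∧ f p.1 = f p.2} := by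
      refine (measurable_fst (hU'm i)).inter ((measurable_snd (hU'm i)).inter (.inter ?_ ?_))
      · exact (measurableSet_eq_fun measurable_fst measurable_snd).compl
      · exact measurableSet_eq_fun (hf.comp measurable_fst) (hf.comp measurable_snd)
    convert hm.analyticSet_image (hf.comp measurable_fst) using 1
    ext x
    constructor
    · rintro ⟨z, hz, z', hz', hne, h1, h2⟩
      exact ⟨(z, z'), ⟨hz, hz', hne, h1.trans h2.symm⟩, h1⟩
    · rintro ⟨⟨z, z'⟩, ⟨hz, hz', hne, h1⟩, h2⟩
      exact ⟨z, hz, z', hz', hne, h2, h1.symm.trans h2⟩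
  have hAe : ∀ x ∈ (univ : Set X), ∃ i ∈ (Finset.univ : Finset ι), x ∉ A i := by
    intro x _
    by_contra h
    push Not at h
    have hb : ∀ z : F, ∀ ε > 0, ∃ t, z ∈ ball t ∧ ball t ⊆ Metric.ball z ε := by
      intro z ε hε
      obtain ⟨n, hn⟩ := exists_nat_gt (δ / ε)
      have hpos : 0 < δ / 2 / ((n : ℝ) + 1) := by positivity
      obtain ⟨m, hm⟩ := (TopologicalSpace.denseRange_denseSeq F).exists_dist_lt z hpos
      refine ⟨(m, n), hm.le, ?_⟩
      intro y hy
      have h1 : dist y (d m) ≤ δ / 2 / ((n : ℝ) + 1) := hy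
      have h2 : dist z (d m) < δ / 2 / ((n : ℝ) + 1) := hm
      have h3 := dist_triangle_right y z (d m)
      have h4 : 2 * (δ / 2 / ((n : ℝ) + 1)) < ε := by
        rw [div_lt_iff₀ hε] at hn
        have : 2 * (δ / 2 / ((n : ℝ) + 1)) = δ / (n + 1) := by field_simp
        rw [this, div_lt_iff₀ (by positivity)]
        nlinarith
      rw [Metric.mem_ball]
      linarith
    have hc : ∀ i, ∃ t : T, ∃ z ∈ U' i, ∃ z' ∈ U' i, f z = x ∧ f z' = x ∧
        z ∈ ball t.1.1 ∧ z' ∈ ball t.1.2 := by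
      intro i
      obtain ⟨z, hz, z', hz', hne, h1, h2⟩ := h i (Finset.mem_univ _)
      have hd : 0 < dist z z' / 2 := half_pos (dist_pos.2 hne)
      obtain ⟨t, ht, hts⟩ := hb z _ hd
      obtain ⟨t', ht', hts'⟩ := hb z' _ hd
      have hdis : Disjoint (ball t) (ball t') :=
        Disjoint.mono hts hts' (Metric.ball_disjoint_ball (by linarith))
      exact ⟨⟨(t, t'), hdis⟩, z, hz, z', hz', h1, h2, ht, ht'⟩
    choose c z hz z' hz' h1 h2 h3 h4 using hc
    obtain ⟨⟨i, b⟩, hj⟩ := hEx c x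
    have hsub : ∀ y, y ∉ ⋃₀ B → y ∉ ⋃₀ (E c) := fun y hy hy' =>
      hy (sUnion_subset_sUnion (subset_iUnion E c) hy')
    cases b
    · exact hj (z' i) ⟨(hz' i).1, by simpa using h4 i⟩ (hsub _ (hz' i).2) (h2 i)
    · exact hj (z i) ⟨(hz i).1, by simpa using h3 i⟩ (hsub _ (hz i).2) (h1 i)
  obtain ⟨C, D', hC, hAC, -, hD', hemp⟩ := fm_separation A hA Finset.univ univ
    MeasurableSet.univ.analyticSet hAe
  obtain ⟨x, hx⟩ := hbig (B ∪ range fun i => U' i \ f ⁻¹' (C i)) (by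
    refine ⟨hB.1.union (countable_range _), ?_⟩
    rintro e (he | ⟨i, rfl⟩)
    · exact hB.2 e he
    · refine ⟨(hU'm i).diff (hf (hC i)), ?_⟩
      rintro y ⟨hy, hyC⟩ z ⟨hz, hzC⟩ hyz
      by_contra hne
      exact hyC (hAC i ⟨y, hy, z, hz, hne, rfl, hyz.symm⟩))
  obtain ⟨i, -, hi⟩ := hemp x (hD' (mem_univ x))
  obtain ⟨z, hz, hzE, hzx⟩ := hx i
  rw [sUnion_union] at hzE
  simp only [mem_union, not_or] at hzE
  exact hzE.2 ⟨_, ⟨i, rfl⟩, ⟨hz, hzE.1⟩, by simpa [hzx] using hi⟩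

/-- A state of the construction at level `n`. -/
structure FMState {F X : Type} [MetricSpace F] [MeasurableSpace F] (f : F → X) (n : ℕ) where
  U : (Fin n → Bool) → Set F
  closed : ∀ i, IsClosed (U i)
  big : FMBig f U

lemma fm_step {F X : Type} [MetricSpace F] [PolishSpace F] [MeasurableSpace F]
    [BorelSpace F] [TopologicalSpace X] [PolishSpace X] [MeasurableSpace X]
    [BorelSpace X] (f : F → X) (hf : Measurable f) (n : ℕ) (S : FMState f n) :
    ∃ S' : FMState f (n + 1), (∀ s, S'.U s ⊆ S.U (fun i => s i.castSucc)) ∧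
      (∀ s, ∀ y ∈ S'.U s, ∀ z ∈ S'.U s, dist y z ≤ 1 / ((n : ℝ) + 1)) ∧
      ∀ s t : Fin (n + 1) → Bool, (∀ i : Fin n, s i.castSucc = t i.castSucc) →
        s (Fin.last n) ≠ t (Fin.last n) → Disjoint (S'.U s) (S'.U t) := by
  obtain ⟨V, h1, h2, h3, h4, h5⟩ := fm_split f hf S.U S.closed S.big (1 / ((n : ℝ) + 1))
    (by positivity)
  refine ⟨⟨fun s => V (fun i => s i.castSucc, s (Fin.last n)), fun s => h1 _, ?_⟩, fun s => h3 _,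
    fun s => h4 _, ?_⟩
  · intro E hE
    obtain ⟨x, hx⟩ := h2 E hE
    exact ⟨x, fun s => hx _⟩
  · intro s t hst hl
    have : (fun i : Fin n => s i.castSucc) = fun i => t i.castSucc := funext hst
    simp only [this]
    cases hs : s (Fin.last n) <;> cases ht : t (Fin.last n)
    · simp [hs, ht] at hl
    · exact h5 _
    · exact (h5 _).symm
    · simp [hs, ht] at hl

/-- Lusin–Novikov, continuous version. -/
lemma fm_novikov_cont {F X : Type} [MetricSpace F] [CompleteSpace F] [PolishSpace F]
    [MeasurableSpace F] [BorelSpace F] [TopologicalSpace X] [PolishSpace X] [MeasurableSpace X]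
    [BorelSpace X] (f : F → X) (hf : Continuous f) (hc : ∀ x, (f ⁻¹' {x}).Countable) :
    ∃ E, FMGood f E ∧ ⋃₀ E = univ := by
  by_contra hcon
  have hbig : FMBig f (fun _ : Fin 0 → Bool => (univ : Set F)) := by
    intro E hE
    by_contra h
    push Not at h
    apply hcon
    refine ⟨E, hE, eq_univ_of_forall fun z => ?_⟩
    by_contra hz
    obtain ⟨_, h'⟩ := h (f z)
    exact h' z (mem_univ z) hz rfl
  choose step hs1 hs2 hs3 using fm_step f hf.measurable
  let S : ∀ n, FMState f n := fun n =>
    Nat.rec ⟨fun _ => univ, fun _ => isClosed_univ, hbig⟩ (fun n s => step n s) n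
  have hS : ∀ n, S (n + 1) = step n (S n) := fun n => rfl
  let A : (ℕ → Bool) → ℕ → Set F := fun α n => (S n).U (fun i => α i)
  have hAc : ∀ α n, IsClosed (A α n) := fun α n => (S n).closed _
  have hAa : ∀ α, Antitone (A α) := fun α => antitone_nat_of_succ_le fun n => hs1 n (S n) _
  have hAd : ∀ α n, ∀ y ∈ A α (n + 1), ∀ z ∈ A α (n + 1), dist y z ≤ 1 / ((n : ℝ) + 1) :=
    fun α n => hs2 n (S n) _
  have hAx : ∀ n, ∃ x, ∀ α, ∃ z ∈ A α n, f z = x := by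
    intro n
    obtain ⟨x, hx⟩ := (S n).big ∅ ⟨countable_empty, by simp⟩
    refine ⟨x, fun α => ?_⟩
    obtain ⟨z, hz, -, h⟩ := hx (fun i => α i)
    exact ⟨z, hz, h⟩
  choose x z hz hzx using hAx
  have hcau : ∀ α, ∃ w, Tendsto (fun n => z n α) atTop (𝓝 w) := by
    intro α
    apply cauchySeq_tendsto_of_complete
    rw [Metric.cauchySeq_iff]
    intro ε hε
    obtain ⟨n, hn⟩ := exists_nat_one_div_lt hε
    refine ⟨n + 1, fun a ha b hb => ?_⟩
    exact (hAd α n _ (hAa α ha (hz a α)) _ (hAa α hb (hz b α))).trans_lt hn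
  choose w hw using hcau
  have hwA : ∀ α n, w α ∈ A α n := by
    intro α n
    refine (hAc α n).mem_of_tendsto (hw α) ?_
    filter_upwards [eventually_ge_atTop n] with m hm
    exact hAa α hm (hz m α)
  have hfw : ∀ α, Tendsto x atTop (𝓝 (f (w α))) := by
    intro α
    have := (hf.tendsto (w α)).comp (hw α)
    refine this.congr fun n => ?_
    exact hzx n α
  have hinj : Function.Injective w := by
    intro α β hαβ
    by_contra hne
    have hex : ∃ n, α n ≠ β n := Function.ne_iff.1 hne
    classical
    have h1 := Nat.find_spec hex
    have h2 := fun m (hm : m < Nat.find hex) => not_not.1 (Nat.find_min hex hm)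
    generalize Nat.find hex = n at h1 h2
    have hd := hs3 n (S n) (fun i => α i) (fun i => β i) (fun i => h2 i i.2) (by simpa using h1)
    refine Set.disjoint_left.1 hd (hwA α (n + 1)) ?_
    rw [hαβ]
    exact hwA β (n + 1)
  have hcon : ∀ α, w α ∈ f ⁻¹' {f (w fun _ => false)} := fun α =>
    tendsto_nhds_unique (hfw α) (hfw _)
  have hcr : (range w).Countable := (hc _).mono (by rintro _ ⟨α, rfl⟩; exact hcon α)
  have : Countable (ℕ → Bool) := by
    rw [← image_univ] at hcr
    exact countable_univ_iff.1 (countable_of_injective_of_countable_image hinj.injOn hcr)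
  obtain ⟨g, hg⟩ := exists_surjective_nat (ℕ → Bool)
  obtain ⟨n, hn⟩ := hg fun n => !(g n n)
  have := congrFun hn n
  simp at this

/-- Lusin–Novikov. -/
lemma fm_novikov {F X : Type} [MeasurableSpace F] [StandardBorelSpace F] [MeasurableSpace X]
    [StandardBorelSpace X] (f : F → X) (hf : Measurable f) (hc : ∀ x, (f ⁻¹' {x}).Countable) :
    ∃ E, FMGood f E ∧ ⋃₀ E = univ := by
  let := upgradeStandardBorel X
  let tF := upgradeStandardBorel F
  obtain ⟨t', hle, hcont, hpol⟩ := hf.exists_continuous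
  have hb : @BorelSpace F t' _ := by
    refine @BorelSpace.mk _ t' _ ?_
    rw [eq_borel_upgradeStandardBorel F]
    exact (borel_eq_borel_of_le hpol tF.toPolishSpace hle).symm
  let := @TopologicalSpace.upgradeIsCompletelyMetrizable F t' inferInstance
  exact fm_novikov_cont f hcont hc

/-- The involution swapping the two projections of `M`. -/
lemma fm_involution {X : Type} [MeasurableSpace X] [StandardBorelSpace X] (M : Set (X × X))
    (hM : MeasurableSet M) (h1 : InjOn Prod.fst M) (h2 : InjOn Prod.snd M)
    (hd : Disjoint (Prod.fst '' M) (Prod.snd '' M)) :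
    ∃ e : X ≃ X, Measurable e ∧ Measurable e.symm ∧ (∀ p ∈ M, e p.1 = p.2) ∧
      ∀ x, e x = x ∨ (x, e x) ∈ M ∨ (e x, x) ∈ M := by
  classical
  let M' : Set (X × X) := M ∪ Prod.swap ⁻¹' M
  have hM' : MeasurableSet M' := hM.union (measurable_swap hM)
  rw [Set.disjoint_left] at hd
  have huniq : ∀ x y y', (x, y) ∈ M' → (x, y') ∈ M' → y = y' := by
    rintro x y y' (h | h) (h' | h')
    · exact congrArg Prod.snd (h1 h h' rfl)
    · exact (hd ⟨_, h, rfl⟩ ⟨_, h', rfl⟩).elim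
    · exact (hd ⟨_, h', rfl⟩ ⟨_, h, rfl⟩).elim
    · exact congrArg Prod.fst (h2 h h' rfl)
  have hsymm : ∀ x y, (x, y) ∈ M' → (y, x) ∈ M' := fun x y h => h.symm
  let g : X → X := fun x => if h : ∃ y, (x, y) ∈ M' then h.choose else x
  have hg1 : ∀ x y, (x, y) ∈ M' → g x = y := by
    intro x y h
    have hex : ∃ y, (x, y) ∈ M' := ⟨y, h⟩
    have : g x = hex.choose := dif_pos hex
    rw [this]
    exact huniq _ _ _ hex.choose_spec h
  have hg2 : ∀ x, (¬ ∃ y, (x, y) ∈ M') → g x = x := fun x h => dif_neg h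
  have hinv : Function.Involutive g := by
    intro x
    by_cases h : ∃ y, (x, y) ∈ M'
    · obtain ⟨y, hy⟩ := h
      rw [hg1 x y hy, hg1 y x (hsymm _ _ hy)]
    · rw [hg2 x h, hg2 x h]
  have hinj : ∀ s : Set X, InjOn Prod.fst (M' ∩ Prod.snd ⁻¹' s) := by
    rintro s ⟨x, y⟩ ⟨h, -⟩ ⟨x', y'⟩ ⟨h', -⟩ hx
    obtain rfl : x = x' := hx
    rw [huniq x y y' h h']
  have him : ∀ s : Set X, MeasurableSet s → MeasurableSet (Prod.fst '' (M' ∩ Prod.snd ⁻¹' s)) :=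
    fun s hs => (hM'.inter (measurable_snd hs)).image_of_measurable_injOn measurable_fst (hinj s)
  have hgm : Measurable g := by
    intro s hs
    have : g ⁻¹' s = Prod.fst '' (M' ∩ Prod.snd ⁻¹' s) ∪
        (s \ Prod.fst '' (M' ∩ Prod.snd ⁻¹' univ)) := by
      ext x
      by_cases h : ∃ y, (x, y) ∈ M'
      · obtain ⟨y, hy⟩ := h
        rw [mem_preimage, hg1 x y hy]
        constructor
        · exact fun hys => Or.inl ⟨(x, y), ⟨hy, hys⟩, rfl⟩
        · rintro (⟨⟨x', y'⟩, ⟨h, hs⟩, hx⟩ | ⟨_, h⟩)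
          · obtain rfl : x' = x := hx
            rwa [huniq _ _ _ hy h]
          · exact (h ⟨(x, y), ⟨hy, mem_univ _⟩, rfl⟩).elim
      · rw [mem_preimage, hg2 x h]
        constructor
        · refine fun hxs => Or.inr ⟨hxs, ?_⟩
          rintro ⟨⟨x', y'⟩, ⟨h', -⟩, hx⟩
          obtain rfl : x' = x := hx
          exact h ⟨_, h'⟩
        · rintro (⟨⟨x', y'⟩, ⟨h', hs⟩, hx⟩ | ⟨h, _⟩)
          · obtain rfl : x' = x := hx
            exact (h ⟨_, h'⟩).elim
          · exact h
    rw [this]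
    exact (him s hs).union (hs.diff (him _ .univ))
  refine ⟨hinv.toPerm g, hgm, hgm, fun p hp => hg1 p.1 p.2 (Or.inl hp), fun x => ?_⟩
  by_cases h : ∃ y, (x, y) ∈ M'
  · obtain ⟨y, hy⟩ := h
    have : (hinv.toPerm g) x = y := hg1 x y hy
    rw [this]
    exact Or.inr hy
  · exact Or.inl (hg2 x h)

/-- **Feldman–Moore theorem**: every countable Borel equivalence relation on a standard
Borel space is the orbit equivalence relation of a Borel action of a countable group. -/
theorem feldman_moore {X : Type} [MeasurableSpace X] [StandardBorelSpace X]
    (r : X → X → Prop) (hr : Equivalence r)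
    (hBorel : MeasurableSet {p : X × X | r p.1 p.2})
    (hcount : ∀ x : X, {y : X | r x y}.Countable) :
    ∃ (G : Type) (_ : Group G) (_ : Countable G) (act : G → X → X),
      (∀ g : G, Measurable (act g)) ∧
      (∀ x : X, act 1 x = x) ∧
      (∀ (g h : G) (x : X), act (g * h) x = act g (act h x)) ∧
      (∀ x y : X, r x y ↔ ∃ g : G, act g x = y) := by
  classical
  let R : Set (X × X) := {p : X × X | r p.1 p.2}
  have hRs : StandardBorelSpace R := hBorel.standardBorel
  have hval : Measurable (Subtype.val : R → X × X) := measurable_subtype_coe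
  obtain ⟨E1, hE1, hE1u⟩ := fm_novikov (fun p : R => p.1.1) (measurable_fst.comp hval) (by
    intro x
    refine ((hcount x).image (fun y => (x, y))).preimage Subtype.val_injective |>.mono ?_
    rintro ⟨⟨a, b⟩, h⟩ hx
    obtain rfl : a = x := hx
    exact ⟨b, h, rfl⟩)
  obtain ⟨E2, hE2, hE2u⟩ := fm_novikov (fun p : R => p.1.2) (measurable_snd.comp hval) (by
    intro x
    refine ((hcount x).image (fun y => (y, x))).preimage Subtype.val_injective |>.mono ?_
    rintro ⟨⟨a, b⟩, h⟩ hx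
    obtain rfl : b = x := hx
    exact ⟨a, hr.symm h, rfl⟩)
  obtain ⟨Q, hQc, hQm, hQs⟩ : ∃ Q : Set (Set X), Q.Countable ∧ (∀ s ∈ Q, MeasurableSet s) ∧
      ∀ x y, x ≠ y → ∃ s ∈ Q, x ∈ s ∧ y ∉ s := by
    let e := embeddingReal X
    have he := measurableEmbedding_embeddingReal X
    refine ⟨(range fun q : ℚ => e ⁻¹' Iio (q : ℝ)) ∪ (range fun q : ℚ => e ⁻¹' Ioi (q : ℝ)),
      (countable_range _).union (countable_range _), ?_, ?_⟩
    · rintro s (⟨q, rfl⟩ | ⟨q, rfl⟩)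
      · exact he.measurable measurableSet_Iio
      · exact he.measurable measurableSet_Ioi
    · intro x y hxy
      rcases lt_or_gt_of_ne (he.injective.ne hxy) with h | h
      · obtain ⟨q, h1, h2⟩ := exists_rat_btwn h
        exact ⟨_, Or.inl ⟨q, rfl⟩, h1, not_lt.2 h2.le⟩
      · obtain ⟨q, h1, h2⟩ := exists_rat_btwn h
        exact ⟨_, Or.inr ⟨q, rfl⟩, h2, not_lt.2 h1.le⟩
  have hE1c := hE1.1.to_subtype
  have hE2c := hE2.1.to_subtype
  have hQc' := hQc.to_subtype
  let I := E1 × E2 × Q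
  let M : I → Set (X × X) := fun i =>
    Subtype.val '' ((i.1 : Set R) ∩ i.2.1) ∩ ((i.2.2 : Set X) ×ˢ (i.2.2 : Set X)ᶜ)
  have hMR : ∀ i, ∀ p ∈ M i, r p.1 p.2 := by
    rintro i p ⟨⟨q, -, rfl⟩, -⟩
    exact q.2
  have hMinv : ∀ i : I, ∃ e : X ≃ X, Measurable e ∧ Measurable e.symm ∧
      (∀ p ∈ M i, e p.1 = p.2) ∧ ∀ x, e x = x ∨ (x, e x) ∈ M i ∨ (e x, x) ∈ M i := by
    rintro ⟨e1, e2, q⟩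
    apply fm_involution
    · refine .inter ?_ ((hQm q q.2).prod (hQm q q.2).compl)
      exact hBorel.subtype_image ((hE1.2 e1 e1.2).1.inter (hE2.2 e2 e2.2).1)
    · rintro _ ⟨⟨a, ⟨ha, -⟩, rfl⟩, -⟩ _ ⟨⟨b, ⟨hb, -⟩, rfl⟩, -⟩ hab
      rw [(hE1.2 e1 e1.2).2 ha hb hab]
    · rintro _ ⟨⟨a, ⟨-, ha⟩, rfl⟩, -⟩ _ ⟨⟨b, ⟨-, hb⟩, rfl⟩, -⟩ hab
      rw [(hE2.2 e2 e2.2).2 ha hb hab]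
    · rw [Set.disjoint_left]
      rintro x ⟨p, ⟨-, hp, -⟩, rfl⟩ ⟨p', ⟨-, -, hp'⟩, h⟩
      exact hp' (h ▸ hp)
  choose e hem hem' heM hex using hMinv
  have her : ∀ i x, r x (e i x) := by
    intro i x
    rcases hex i x with h | h | h
    · rw [h]; exact hr.refl x
    · exact hMR i _ h
    · exact hr.symm (hMR i _ h)
  let φ : FreeGroup I →* Equiv.Perm X := FreeGroup.lift (fun i => (e i : Equiv.Perm X))
  have hφ : ∀ g : FreeGroup I, Measurable (φ g) ∧ ∀ x, r x (φ g x) := by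
    intro g
    induction g using FreeGroup.induction_on with
    | C1 => simpa using ⟨measurable_id, hr.refl⟩
    | of i => simpa [φ] using ⟨hem i, her i⟩
    | inv_of i _ =>
      have : φ (FreeGroup.of i)⁻¹ = (e i).symm := by simp [φ]; rfl
      change Measurable (φ (FreeGroup.of i)⁻¹) ∧ ∀ x, r x (φ (FreeGroup.of i)⁻¹ x)
      rw [this]
      refine ⟨hem' i, fun x => ?_⟩
      have := her i ((e i).symm x)
      rw [Equiv.apply_symm_apply] at this
      exact hr.symm this
    | mul a b ha hb =>
      rw [map_mul]
      exact ⟨ha.1.comp hb.1, fun x => hr.trans (hb.2 x) (ha.2 _)⟩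
  refine ⟨FreeGroup I, inferInstance, ?_, fun g => φ g, fun g => (hφ g).1, by simp, by simp, ?_⟩
  · exact Function.Injective.countable (FreeGroup.toWord_injective (α := I))
  · intro x y
    constructor
    · intro hxy
      by_cases hne : x = y
      · exact ⟨1, by simpa using hne⟩
      · obtain ⟨q, hq, hxq, hyq⟩ := hQs x y hne
        have hm : (⟨(x, y), hxy⟩ : R) ∈ ⋃₀ E1 := by rw [hE1u]; trivial
        have hm' : (⟨(x, y), hxy⟩ : R) ∈ ⋃₀ E2 := by rw [hE2u]; trivial
        obtain ⟨e1, he1, h1⟩ := hm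
        obtain ⟨e2, he2, h2⟩ := hm'
        let i : I := (⟨e1, he1⟩, ⟨e2, he2⟩, ⟨q, hq⟩)
        refine ⟨FreeGroup.of i, ?_⟩
        have : φ (FreeGroup.of i) = e i := by simp [φ]
        change φ (FreeGroup.of i) x = y
        rw [this]
        exact heM i (x, y) ⟨⟨_, ⟨h1, h2⟩, rfl⟩, hxq, hyq⟩
    · rintro ⟨g, rfl⟩
      exact (hφ g).2 x
end
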